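/- arXiv:2011.07922 — 2 statements merged into one kernel-verified Lean document; each statement's English description precedes it below -/
import Mathlib

section
/- Let Z^{2¹²}(τ,z) = 2·(η(τ)⁸/η(2τ)⁴)·φ_{−2,1}(τ,z) be the twined elliptic genus for the M₂₄ class 2b. Then for all τ ∈ ℍ and z ∈ ℂ, exp(−4πi z²/(2τ+1)) · Z^{2¹²}( τ/(2τ+1), z/(2τ+1) ) = −Z^{2¹²}(τ,z); that is, the slash of Z^{2¹²} by the matrix M_{1/2} = (1,0;2,1) representing the width-one cusp 1/2 of Γ₀(4) equals −Z^{2¹²}. -/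
open Complex


/-- The Dedekind eta function. -/
noncomputable def Eta (τ : ℂ) : ℂ :=
  Complex.exp (Real.pi * I * τ / 12) *
    ∏' n : ℕ, (1 - Complex.exp (2 * Real.pi * I * ((n : ℂ) + 1) * τ))

noncomputable def θ₁ (τ z : ℂ) : ℂ :=
  -I * ∑' n : ℤ, (-1 : ℂ) ^ n *
    Complex.exp (Real.pi * I * ((n : ℂ) + 1 / 2) ^ 2 * τ + (2 * (n : ℂ) + 1) * Real.pi * I * z)

noncomputable def θ₂ (τ z : ℂ) : ℂ :=
  ∑' n : ℤ,
    Complex.exp (Real.pi * I * ((n : ℂ) + 1 / 2) ^ 2 * τ + (2 * (n : ℂ) + 1) * Real.pi * I * z)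

noncomputable def θ₃ (τ z : ℂ) : ℂ :=
  ∑' n : ℤ, Complex.exp (Real.pi * I * (n : ℂ) ^ 2 * τ + 2 * (n : ℂ) * Real.pi * I * z)

noncomputable def θ₄ (τ z : ℂ) : ℂ :=
  ∑' n : ℤ, (-1 : ℂ) ^ n *
    Complex.exp (Real.pi * I * (n : ℂ) ^ 2 * τ + 2 * (n : ℂ) * Real.pi * I * z)

/-- The weak Jacobi form φ_{0,1}. -/
noncomputable def φ01 (τ z : ℂ) : ℂ :=
  4 * ((θ₂ τ z / θ₂ τ 0) ^ 2 + (θ₃ τ z / θ₃ τ 0) ^ 2 + (θ₄ τ z / θ₄ τ 0) ^ 2)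

/-- The weak Jacobi form φ_{−2,1}. -/
noncomputable def φm21 (τ z : ℂ) : ℂ := θ₁ τ z ^ 2 / Eta τ ^ 6

/-- Twined elliptic genus for the class 2b (cycle shape 2^12). -/
noncomputable def Z2b (τ z : ℂ) : ℂ :=
  2 * (Eta τ ^ 8 / Eta (2 * τ) ^ 4) * φm21 τ z

lemma ne_zero_of_im_pos {τ : ℂ} (hτ : 0 < τ.im) : τ ≠ 0 := by
  rintro rfl
  simp at hτ

/-- `Eta` is Mathlib's Dedekind eta function. -/
lemma Eta_eq_eta (τ : ℂ) : Eta τ = ModularForm.eta τ := by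
  simp only [Eta, ModularForm.eta, ModularForm.eta_q_eq_cexp, Function.Periodic.qParam]
  congr 2
  push_cast
  ring

lemma Eta_ne_zero {τ : ℂ} (hτ : 0 < τ.im) : Eta τ ≠ 0 := by
  rw [Eta_eq_eta]
  exact ModularForm.eta_ne_zero hτ

/-- The square of `η` under `τ ↦ -1 / τ`. -/
lemma Eta_sq_neg_one_div {τ : ℂ} (hτ : 0 < τ.im) :
    Eta (-1 / τ) ^ 2 = -I * τ * Eta τ ^ 2 := by
  have h := ModularForm.eta_comp_eq_csqrt_I_inv hτ
  simp only [Function.comp_apply, Pi.smul_apply, Pi.mul_apply, smul_eq_mul] at h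
  have hsq (x : ℂ) : sqrt x ^ 2 = x := by
    rw [sqrt, ← cpow_nat_mul]
    norm_num
  rw [Eta_eq_eta, Eta_eq_eta, h, mul_pow, mul_pow, inv_pow, hsq, hsq, inv_I]
  ring

/-- The square of `η` under `τ ↦ τ - 1`. -/
lemma Eta_sq_sub_one (τ : ℂ) :
    Eta (τ - 1) ^ 2 = exp (-(Real.pi * I / 6)) * Eta τ ^ 2 := by
  have h (n : ℕ) : exp (2 * Real.pi * I * ((n : ℂ) + 1) * (τ - 1)) =
      exp (2 * Real.pi * I * ((n : ℂ) + 1) * τ) := by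
    rw [exp_eq_exp_iff_exists_int]
    refine ⟨-(n + 1 : ℤ), ?_⟩
    push_cast
    ring
  simp only [Eta, h, mul_pow, ← exp_nat_mul, ← mul_assoc, ← exp_add]
  congr 2
  push_cast
  ring

/-- `θ₁` in terms of Mathlib's two-variable Jacobi theta function. -/
lemma theta_one_eq_jacobiTheta₂ (τ z : ℂ) :
    θ₁ τ z = -I * exp (Real.pi * I * τ / 4 + Real.pi * I * z) *
      jacobiTheta₂ (z + τ / 2 + 1 / 2) τ := by
  rw [θ₁, jacobiTheta₂, mul_assoc, ← tsum_mul_left (a := exp _)]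
  refine congrArg (-I * ·) (tsum_congr fun n ↦ ?_)
  rw [jacobiTheta₂_term, ← exp_add, ← exp_pi_mul_I, ← exp_int_mul, ← exp_add]
  congr 1
  ring

lemma theta_one_sq_eq (τ z : ℂ) :
    θ₁ τ z ^ 2 = -(exp (Real.pi * I * τ / 2 + 2 * Real.pi * I * z) *
      jacobiTheta₂ (z + τ / 2 + 1 / 2) τ ^ 2) := by
  rw [theta_one_eq_jacobiTheta₂, mul_pow, mul_pow, ← exp_nat_mul, neg_sq, I_sq, neg_one_mul,
    neg_mul]
  congr 3
  push_cast
  ring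

/-- The square of `θ₁` under `(τ, z) ↦ (-1 / τ, z / τ)`. -/
lemma theta_one_sq_neg_one_div {τ : ℂ} (hτ : τ ≠ 0) (z : ℂ) :
    θ₁ (-1 / τ) (z / τ) ^ 2 =
      I * τ * exp (2 * Real.pi * I * z ^ 2 / τ) * θ₁ τ z ^ 2 := by
  have hshift : z / τ + -1 / τ / 2 + 1 / 2 = (z + τ / 2 + 1 / 2) / τ + -1 / τ := by
    field_simp
    ring
  have hsq : (1 / (-I * τ) ^ (1 / 2 : ℂ)) ^ 2 = I / τ := by
    rw [div_pow, one_pow, ← cpow_nat_mul]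
    norm_num
    field_simp
  rw [theta_one_sq_eq, theta_one_sq_eq, hshift, jacobiTheta₂_add_left',
    jacobiTheta₂_functional_equation (z + τ / 2 + 1 / 2) τ]
  simp only [mul_pow, hsq, ← exp_nat_mul]
  have hexp : exp (Real.pi * I * (-1 / τ) / 2 + 2 * Real.pi * I * (z / τ)) *
      exp ((2 : ℕ) * (-Real.pi * I * (-1 / τ + 2 * ((z + τ / 2 + 1 / 2) / τ)))) =
      -(exp (2 * Real.pi * I * z ^ 2 / τ) * exp (Real.pi * I * τ / 2 + 2 * Real.pi * I * z) *
        exp ((2 : ℕ) * (-Real.pi * I * (z + τ / 2 + 1 / 2) ^ 2 / τ))) := by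
    simp only [← exp_add]
    rw [← exp_sub_pi_mul_I]
    congr 1
    push_cast
    field_simp
    ring
  rw [← mul_assoc, hexp]
  field_simp
  simp only [I_sq]
  ring

/-- The square of `θ₁` under `τ ↦ τ - 2`. -/
lemma theta_one_sq_sub_two (τ z : ℂ) : θ₁ (τ - 2) z ^ 2 = -θ₁ τ z ^ 2 := by
  have hz : z + (τ - 2) / 2 + 1 / 2 + 1 = z + τ / 2 + 1 / 2 := by ring
  have hexp : exp (Real.pi * I * (τ - 2) / 2 + 2 * Real.pi * I * z) =
      -exp (Real.pi * I * τ / 2 + 2 * Real.pi * I * z) := by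
    rw [← exp_sub_pi_mul_I]
    congr 1
    ring
  rw [theta_one_sq_eq, theta_one_sq_eq, ← jacobiTheta₂_add_left, hz, hexp,
    ← jacobiTheta₂_add_right, sub_add_cancel]
  ring

lemma im_neg_one_div_pos {τ : ℂ} (hτ : 0 < τ.im) : 0 < (-1 / τ).im := by
  have hτ0 : τ ≠ 0 := ne_zero_of_im_pos hτ
  rw [neg_div, one_div, neg_im, inv_im, neg_div, neg_neg]
  exact div_pos hτ (normSq_pos.mpr hτ0)

/-- The square of `η` under `τ ↦ τ / (τ + 1)`. -/
lemma Eta_sq_div_add_one {τ : ℂ} (hτ : 0 < τ.im) :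
    Eta (τ / (τ + 1)) ^ 2 = (τ + 1) * exp (-(Real.pi * I / 6)) * Eta τ ^ 2 := by
  have hτ0 : τ ≠ 0 := ne_zero_of_im_pos hτ
  have hτ1 : τ + 1 ≠ 0 := ne_zero_of_im_pos (by simpa using hτ)
  have hw : 0 < (-1 / τ - 1).im := by simpa using im_neg_one_div_pos hτ
  have hw0 : -1 / τ - 1 ≠ 0 := ne_zero_of_im_pos hw
  have hM : τ / (τ + 1) = -1 / (-1 / τ - 1) := by
    rw [div_eq_div_iff hτ1 hw0]
    field_simp
    ring
  rw [hM, Eta_sq_neg_one_div hw, Eta_sq_sub_one, Eta_sq_neg_one_div hτ]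
  field_simp
  rw [I_sq]
  ring

/-- The square of `η` under `τ ↦ τ / (2 * τ + 1)`. -/
lemma Eta_sq_div_two_mul_add_one {τ : ℂ} (hτ : 0 < τ.im) :
    Eta (τ / (2 * τ + 1)) ^ 2 =
      (2 * τ + 1) * exp (-(Real.pi * I / 6)) ^ 2 * Eta τ ^ 2 := by
  have hτ1 : τ + 1 ≠ 0 := ne_zero_of_im_pos (by simpa using hτ)
  have hτ2 : 2 * τ + 1 ≠ 0 := ne_zero_of_im_pos (by simpa using hτ)
  have hM : τ / (2 * τ + 1) = τ / (τ + 1) / (τ / (τ + 1) + 1) := by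
    have : τ / (τ + 1) + 1 = (2 * τ + 1) / (τ + 1) := by
      field_simp
      ring
    rw [this]
    field_simp
  have him : 0 < (τ / (τ + 1)).im := by
    have : τ / (τ + 1) = 1 + -1 / (τ + 1) := by
      field_simp
      ring
    rw [this, add_im, one_im, zero_add]
    exact im_neg_one_div_pos (by simpa using hτ)
  rw [hM, Eta_sq_div_add_one him, Eta_sq_div_add_one hτ]
  field_simp
  ring

/-- The square of `θ₁` under `(τ, z) ↦ (τ / (2 * τ + 1), z / (2 * τ + 1))`. -/
lemma theta_one_sq_div_two_mul_add_one {τ : ℂ} (hτ : 0 < τ.im) (z : ℂ) :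
    θ₁ (τ / (2 * τ + 1)) (z / (2 * τ + 1)) ^ 2 =
      -((2 * τ + 1) * exp (4 * Real.pi * I * z ^ 2 / (2 * τ + 1)) * θ₁ τ z ^ 2) := by
  have hτ0 : τ ≠ 0 := ne_zero_of_im_pos hτ
  have hτ2 : 2 * τ + 1 ≠ 0 := ne_zero_of_im_pos (by simpa using hτ)
  have hw : -1 / τ - 2 = -(2 * τ + 1) / τ := by
    field_simp
    ring
  have hw0 : -1 / τ - 2 ≠ 0 := by
    rw [hw]
    exact div_ne_zero (neg_ne_zero.mpr hτ2) hτ0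
  have hM : τ / (2 * τ + 1) = -1 / (-1 / τ - 2) := by
    rw [hw]
    field_simp
  have hz : z / (2 * τ + 1) = -z / τ / (-1 / τ - 2) := by
    rw [hw]
    field_simp
  have hodd : θ₁ τ (-z) ^ 2 = θ₁ τ z ^ 2 := by
    have h := jacobiTheta₂_add_left' (-(z + τ / 2 + 1 / 2)) τ
    rw [jacobiTheta₂_neg_left, ← jacobiTheta₂_add_left] at h
    rw [theta_one_sq_eq, theta_one_sq_eq,
      show -z + τ / 2 + 1 / 2 = -(z + τ / 2 + 1 / 2) + τ + 1 by ring, h, mul_pow, ← exp_nat_mul,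
      ← mul_assoc, ← exp_add]
    congr 2
    rw [exp_eq_exp_iff_exists_int]
    refine ⟨1, ?_⟩
    push_cast
    ring
  rw [hM, hz, theta_one_sq_neg_one_div hw0, theta_one_sq_sub_two,
    theta_one_sq_neg_one_div hτ0, hodd]
  have hexp : exp (4 * Real.pi * I * z ^ 2 / (2 * τ + 1)) =
      exp (2 * Real.pi * I * (-z / τ) ^ 2 / (-1 / τ - 2)) *
        exp (2 * Real.pi * I * (-z) ^ 2 / τ) := by
    rw [← exp_add, hw]
    congr 1
    field_simp
    ring
  rw [hexp]
  generalize exp (2 * Real.pi * I * (-z / τ) ^ 2 / (-1 / τ - 2)) = a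
  generalize exp (2 * Real.pi * I * (-z) ^ 2 / τ) = b
  rw [hw]
  field_simp
  rw [I_sq]
  ring

/-- The slash of Z^{2¹²} by M_{1/2} = (1,0;2,1) equals −Z^{2¹²}. -/
theorem Z2b_slash_M_half (τ : ℂ) (hτ : 0 < τ.im) (z : ℂ) :
    Complex.exp (-4 * Real.pi * I * z ^ 2 / (2 * τ + 1)) *
        Z2b (τ / (2 * τ + 1)) (z / (2 * τ + 1)) =
      -Z2b τ z := by
  have hτ2 : 2 * τ + 1 ≠ 0 := ne_zero_of_im_pos (by simpa using hτ)
  have hτ' : 0 < (2 * τ).im := by simpa using hτ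
  have hη := Eta_ne_zero hτ
  have hη2 := Eta_ne_zero hτ'
  have hζ := exp_ne_zero (-(Real.pi * I / 6))
  have hexp : exp (-4 * Real.pi * I * z ^ 2 / (2 * τ + 1)) *
      exp (4 * Real.pi * I * z ^ 2 / (2 * τ + 1)) = 1 := by
    rw [← exp_add, ← exp_zero]
    congr 1
    ring
  have hpow (x : ℂ) : x ^ 8 = (x ^ 2) ^ 4 ∧ x ^ 6 = (x ^ 2) ^ 3 ∧ x ^ 4 = (x ^ 2) ^ 2 :=
    ⟨by ring, by ring, by ring⟩
  simp only [Z2b, φm21]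
  rw [← mul_div_assoc 2 τ, (hpow _).1, (hpow (Eta (τ / _))).2.1, (hpow (Eta (2 * τ / _))).2.2,
    Eta_sq_div_two_mul_add_one hτ, Eta_sq_div_add_one hτ', theta_one_sq_div_two_mul_add_one hτ]
  generalize exp (-4 * Real.pi * I * z ^ 2 / (2 * τ + 1)) = a at *
  generalize exp (4 * Real.pi * I * z ^ 2 / (2 * τ + 1)) = b at *
  generalize exp (-(Real.pi * I / 6)) = ζ at *
  field_simp
  linear_combination (-θ₁ τ z ^ 2) * hexp
end

section
/- Let Z^{2²10²}(τ,z) = 2·(η(τ)³η(2τ)η(5τ)/η(10τ))·φ_{−2,1}(τ,z) be the twined elliptic genus for the M₂₄ class 10a. Then for all τ ∈ ℍ and z ∈ ℂ, exp(−20πi z²/(10τ+1)) · Z^{2²10²}( τ/(10τ+1), z/(10τ+1) ) = −Z^{2²10²}(τ,z); that is, the slash of Z^{2²10²} by the matrix M_{1/10} = (1,0;10,1) representing the width-one cusp 1/10 of Γ₀(20) equals −Z^{2²10²}. -/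
open Complex


/-- Twined elliptic genus for the class 10a (cycle shape 2^2 10^2). -/
noncomputable def Z10a (τ z : ℂ) : ℂ :=
  2 * (Eta τ ^ 3 * Eta (2 * τ) * Eta (5 * τ) / Eta (10 * τ)) * φm21 τ z

lemma Eta_sub_nat (τ : ℂ) (m : ℕ) :
    Eta (τ - m) = Complex.exp (-(Real.pi * I * m / 12)) * Eta τ := by
  have hexp (n : ℕ) : Complex.exp (2 * Real.pi * I * ((n : ℂ) + 1) * (τ - m)) =
      Complex.exp (2 * Real.pi * I * ((n : ℂ) + 1) * τ) := by
    rw [Complex.exp_eq_exp_iff_exists_int]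
    exact ⟨-((n + 1) * m), by push_cast; ring⟩
  simp only [Eta, hexp]
  rw [← mul_assoc, ← Complex.exp_add]
  congr 2
  ring

lemma Eta_neg_one_div {τ : ℂ} (hτ : 0 < τ.im) :
    Eta (-1 / τ) = (Complex.sqrt I)⁻¹ * (Complex.sqrt τ * Eta τ) := by
  simpa [Eta_eq_eta] using ModularForm.eta_comp_eq_csqrt_I_inv hτ

lemma complex_sqrt_sq (x : ℂ) : Complex.sqrt x ^ 2 = x := by
  rw [Complex.sqrt, ← Complex.cpow_nat_mul]
  simp

lemma complex_sqrt_real_mul {r : ℝ} (hr : 0 < r) (x : ℂ) :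
    Complex.sqrt (r * x) = Complex.sqrt r * Complex.sqrt x := by
  rcases eq_or_ne x 0 with rfl | hx
  · simp [Complex.sqrt]
  · have hr' : (r : ℂ) ≠ 0 := by exact_mod_cast hr.ne'
    rw [Complex.sqrt, Complex.sqrt, Complex.sqrt, Complex.cpow_def_of_ne_zero (mul_ne_zero hr' hx),
      Complex.cpow_def_of_ne_zero hr', Complex.cpow_def_of_ne_zero hx, Complex.log_ofReal_mul hr hx,
      ← Complex.exp_add, Complex.ofReal_log hr.le]
    ring_nf

/-- The transformation of `η` under `(1,0;m,1)`. -/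
lemma Eta_div_mul_add_one {τ : ℂ} (hτ : 0 < τ.im) (m : ℕ) :
    Eta (τ / (m * τ + 1)) = -I * Complex.exp (-(Real.pi * I * m / 12)) *
      (Complex.sqrt (-1 / τ - m) * Complex.sqrt τ) * Eta τ := by
  have h0 : τ ≠ 0 := by rintro rfl; simp at hτ
  have hu : 0 < (-1 / τ - m : ℂ).im := by simpa using im_neg_one_div_pos hτ
  have hu0 : (-1 / τ - m : ℂ) ≠ 0 := fun h => by simp [h] at hu
  have hm : (m * τ + 1 : ℂ) ≠ 0 := by
    contrapose! hu0
    field_simp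
    linear_combination -hu0
  have hI : (Complex.sqrt I)⁻¹ * (Complex.sqrt I)⁻¹ = -I := by
    rw [← mul_inv, ← sq, complex_sqrt_sq, Complex.inv_I]
  have hM : τ / (m * τ + 1) = -1 / (-1 / τ - m) := by
    rw [div_eq_div_iff hm hu0]
    field_simp
    ring
  rw [hM, Eta_neg_one_div hu, Eta_sub_nat, Eta_neg_one_div hτ, ← hI]
  ring

lemma θ₁_eq_jacobiTheta₂ (τ z : ℂ) :
    θ₁ τ z = -I * (Complex.exp (Real.pi * I * (τ / 4 + z)) *
      jacobiTheta₂ (z + τ / 2 + 1 / 2) τ) := by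
  rw [θ₁, jacobiTheta₂, ← tsum_mul_left (a := Complex.exp _)]
  congr 1
  refine tsum_congr fun n => ?_
  rw [jacobiTheta₂_term, ← Complex.exp_pi_mul_I, ← Complex.exp_int_mul, ← Complex.exp_add,
    ← Complex.exp_add]
  congr 1
  ring

lemma θ₁_neg (τ z : ℂ) : θ₁ τ (-z) = -θ₁ τ z := by
  rw [θ₁, θ₁, ← mul_neg, ← tsum_neg, ← (Equiv.subLeft (-1 : ℤ)).tsum_eq]
  congr 1
  refine tsum_congr fun n => ?_
  rw [Equiv.subLeft_apply, zpow_sub₀ (by norm_num), zpow_neg, zpow_one]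
  rcases Int.even_or_odd n with h | h <;> simp only [h.neg_one_zpow] <;> push_cast <;> ring_nf

lemma θ₁_sub_nat (τ z : ℂ) (m : ℕ) :
    θ₁ (τ - m) z = Complex.exp (-(Real.pi * I * m / 4)) * θ₁ τ z := by
  rw [θ₁, θ₁, mul_left_comm, ← tsum_mul_left (a := Complex.exp _)]
  congr 1
  refine tsum_congr fun n => ?_
  rw [mul_left_comm, ← Complex.exp_add]
  congr 1
  rw [Complex.exp_eq_exp_iff_exists_int]
  obtain ⟨k, hk⟩ := Int.even_mul_succ_self n
  have hk' : (n : ℂ) * (n + 1) = k + k := by exact_mod_cast hk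
  refine ⟨-(k * m), ?_⟩
  push_cast
  linear_combination (-(Real.pi * I * m : ℂ)) * hk'

lemma θ₁_neg_one_div_sq {τ : ℂ} (hτ : 0 < τ.im) (z : ℂ) :
    θ₁ (-1 / τ) (z / τ) ^ 2 =
      I * τ * Complex.exp (2 * Real.pi * I * z ^ 2 / τ) * θ₁ τ z ^ 2 := by
  have h0 : τ ≠ 0 := by rintro rfl; simp at hτ
  have hper : jacobiTheta₂ (z + τ / 2 + 1 / 2) τ = jacobiTheta₂ (z + τ / 2 - 1 / 2) τ := by
    rw [← jacobiTheta₂_add_left (z + τ / 2 - 1 / 2)]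
    ring_nf
  have hfun := jacobiTheta₂_functional_equation (z + τ / 2 - 1 / 2) τ
  have harg : (z + τ / 2 - 1 / 2) / τ = z / τ + -1 / τ / 2 + 1 / 2 := by
    field_simp
    ring
  rw [harg] at hfun
  have hsq : ((-I * τ) ^ (1 / 2 : ℂ)) ^ 2 = -I * τ := by
    rw [← Complex.cpow_nat_mul]
    simp
  have hexp : Complex.exp (Real.pi * I * (-1 / τ / 4 + z / τ)) ^ 2 =
      Complex.exp (-(Real.pi * I)) * (Complex.exp (2 * Real.pi * I * z ^ 2 / τ) *
        Complex.exp (Real.pi * I * (τ / 4 + z)) ^ 2 *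
        Complex.exp (-Real.pi * I * (z + τ / 2 - 1 / 2) ^ 2 / τ) ^ 2) := by
    rw [← Complex.exp_nat_mul, ← Complex.exp_nat_mul,
      ← Complex.exp_nat_mul, ← Complex.exp_add, ← Complex.exp_add, ← Complex.exp_add]
    congr 1
    push_cast
    field_simp
    ring
  rw [θ₁_eq_jacobiTheta₂, θ₁_eq_jacobiTheta₂, hper, hfun]
  simp only [mul_pow, div_pow, hexp, Complex.exp_neg_pi_mul_I, hsq]
  field_simp

lemma θ₁_div_ten_mul_add_one_sq {τ : ℂ} (hτ : 0 < τ.im) (z : ℂ) :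
    Complex.exp (-20 * Real.pi * I * z ^ 2 / (10 * τ + 1)) *
      θ₁ (τ / (10 * τ + 1)) (z / (10 * τ + 1)) ^ 2 = -(10 * τ + 1) * θ₁ τ z ^ 2 := by
  have h0 : τ ≠ 0 := by rintro rfl; simp at hτ
  have hu : 0 < (-1 / τ - (10 : ℕ) : ℂ).im := by simpa using im_neg_one_div_pos hτ
  have hu0 : (-1 / τ - (10 : ℕ) : ℂ) ≠ 0 := fun h => by rw [h] at hu; simp at hu
  have hv : -1 / τ - (10 : ℕ) = -(10 * τ + 1) / τ := by
    push_cast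
    field_simp
    ring
  have hm : (10 * τ + 1 : ℂ) ≠ 0 := by
    contrapose! hu0
    rw [hv, hu0]
    simp
  have hM : τ / (10 * τ + 1) = -1 / (-1 / τ - (10 : ℕ)) := by
    rw [hv]
    field_simp
  have hz : z / (10 * τ + 1) = (-z / τ) / (-1 / τ - (10 : ℕ)) := by
    rw [hv]
    field_simp
  have hphase : Complex.exp (-(Real.pi * I * (10 : ℕ) / 4)) ^ 2 = -1 := by
    rw [← Complex.exp_nat_mul, ← Complex.exp_pi_mul_I, Complex.exp_eq_exp_iff_exists_int]
    exact ⟨-3, by push_cast; ring⟩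
  have hexp : Complex.exp (-20 * Real.pi * I * z ^ 2 / (10 * τ + 1)) *
      (Complex.exp (2 * Real.pi * I * (-z / τ) ^ 2 / (-1 / τ - (10 : ℕ))) *
        Complex.exp (2 * Real.pi * I * (-z) ^ 2 / τ)) = 1 := by
    rw [← Complex.exp_add, ← Complex.exp_add, Complex.exp_eq_one_iff]
    refine ⟨0, ?_⟩
    rw [hv]
    field_simp
    ring
  rw [hM, hz, θ₁_neg_one_div_sq hu, θ₁_sub_nat, mul_pow, hphase, θ₁_neg_one_div_sq hτ, θ₁_neg,
    neg_sq (θ₁ τ z)]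
  have hprod : (-1 / τ - (10 : ℕ)) * τ = -(10 * τ + 1) := by
    rw [hv]
    field_simp
  linear_combination ((-1 / τ - (10 : ℕ)) * τ * θ₁ τ z ^ 2) * hexp + θ₁ τ z ^ 2 * hprod -
    Complex.exp (-20 * Real.pi * I * z ^ 2 / (10 * τ + 1)) *
      (Complex.exp (2 * Real.pi * I * (-z / τ) ^ 2 / (-1 / τ - (10 : ℕ))) *
        Complex.exp (2 * Real.pi * I * (-z) ^ 2 / τ)) *
      ((-1 / τ - (10 : ℕ)) * τ * θ₁ τ z ^ 2) * I_sq

/-- For a divisor `k` of `10`, the transformation of `η(kτ)` under `(1,0;10,1)`; the automorphy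
factor does not depend on `k`. -/
lemma Eta_mul_div_ten_mul_add_one {τ : ℂ} (hτ : 0 < τ.im) {k m : ℕ} (hkm : k * m = 10) :
    Eta (k * (τ / (10 * τ + 1))) = -I * Complex.exp (-(Real.pi * I * m / 12)) *
      (Complex.sqrt (-1 / τ - 10) * Complex.sqrt τ) * Eta (k * τ) := by
  have hk : 0 < k := Nat.pos_of_ne_zero (by rintro rfl; simp at hkm)
  have hk' : (0 : ℝ) < k := by exact_mod_cast hk
  have hkC : (k : ℂ) ≠ 0 := by exact_mod_cast hk.ne'
  have h0 : τ ≠ 0 := by rintro rfl; simp at hτ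
  have hC : (k : ℂ) * m = 10 := by exact_mod_cast hkm
  have hkτ : 0 < ((k : ℂ) * τ).im := by simpa using mul_pos hk' hτ
  have harg : k * (τ / (10 * τ + 1)) = k * τ / (m * (k * τ) + 1) := by
    rw [← hC]
    ring
  have hinv : (-1 / τ - 10 : ℂ) = (k : ℝ) * (-1 / (k * τ) - m) := by
    rw [← hC]
    push_cast
    field_simp
  have hsqrt := complex_sqrt_real_mul hk' τ
  rw [Complex.ofReal_natCast] at hsqrt
  rw [harg, Eta_div_mul_add_one hkτ, hinv, complex_sqrt_real_mul hk', hsqrt,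
    Complex.ofReal_natCast]
  ring

/-- The slash of Z^{2²10²} by M_{1/10} = (1,0;10,1) equals −Z^{2²10²}. -/
theorem Z10a_slash_M_tenth (τ : ℂ) (hτ : 0 < τ.im) (z : ℂ) :
    Complex.exp (-20 * Real.pi * I * z ^ 2 / (10 * τ + 1)) *
        Z10a (τ / (10 * τ + 1)) (z / (10 * τ + 1)) =
      -Z10a τ z := by
  have h0 : τ ≠ 0 := by rintro rfl; simp at hτ
  have hm : (10 * τ + 1 : ℂ) ≠ 0 := fun h => by
    have := congrArg Complex.im h
    simp at this
    exact hτ.ne' this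
  have e1 := Eta_mul_div_ten_mul_add_one hτ (k := 1) (m := 10) rfl
  have e2 := Eta_mul_div_ten_mul_add_one hτ (k := 2) (m := 5) rfl
  have e5 := Eta_mul_div_ten_mul_add_one hτ (k := 5) (m := 2) rfl
  have e10 := Eta_mul_div_ten_mul_add_one hτ (k := 10) (m := 1) rfl
  have hθ := θ₁_div_ten_mul_add_one_sq hτ z
  have hR : (Complex.sqrt (-1 / τ - 10) * Complex.sqrt τ) ^ 2 = -(10 * τ + 1) := by
    rw [mul_pow, complex_sqrt_sq, complex_sqrt_sq]
    field_simp
    ring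
  have hphase (n : ℕ) : Complex.exp (-(Real.pi * I * n / 12)) =
      Complex.exp (-(Real.pi * I / 12)) ^ n := by
    rw [← Complex.exp_nat_mul]
    ring_nf
  have hζ : Complex.exp (-(Real.pi * I / 12)) ^ 24 = 1 := by
    rw [← Complex.exp_nat_mul, Complex.exp_eq_one_iff]
    exact ⟨-1, by push_cast; ring⟩
  have hζ0 := Complex.exp_ne_zero (-(Real.pi * I / 12))
  rw [hphase] at e1 e2 e5 e10
  push_cast at e1 e2 e5 e10
  rw [one_mul, one_mul] at e1
  have hR0 : Complex.sqrt (-1 / τ - 10) * Complex.sqrt τ ≠ 0 := fun h => by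
    rw [h] at hR
    exact hm (by linear_combination hR)
  have n1 := Eta_ne_zero hτ
  have n10 : Eta (10 * τ) ≠ 0 := Eta_ne_zero (by simpa using hτ)
  simp only [Z10a, φm21, e1, e2, e5, e10]
  generalize Complex.exp (-(Real.pi * I / 12)) = ζ at *
  generalize Complex.sqrt (-1 / τ - 10) * Complex.sqrt τ = R at *
  generalize Complex.exp (-20 * Real.pi * I * z ^ 2 / (10 * τ + 1)) = E at *
  generalize θ₁ (τ / (10 * τ + 1)) (z / (10 * τ + 1)) = T at *
  rw [← hR] at hθ
  have hcoef : E * (2 * ((-I * ζ ^ 10 * R * Eta τ) ^ 3 * (-I * ζ ^ 5 * R * Eta (2 * τ)) *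
      (-I * ζ ^ 2 * R * Eta (5 * τ)) / (-I * ζ ^ 1 * R * Eta (10 * τ))) *
      (T ^ 2 / (-I * ζ ^ 10 * R * Eta τ) ^ 6)) =
      2 * (Eta τ ^ 3 * Eta (2 * τ) * Eta (5 * τ) / Eta (10 * τ)) *
        ((E * T ^ 2) / (I ^ 2 * ζ ^ 24 * R ^ 2 * Eta τ ^ 6)) := by
    field_simp
  rw [hcoef, hθ, hζ, I_sq]
  field_simp
end
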